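/- arXiv:1303.2453 — 2 statements merged into one kernel-verified Lean document; each statement's English description precedes it below -/
import Mathlib

section
/- Let s be a level-2 stack with TOP₁(s)=(σ,2,k), and let ρ ∈ Runs(s,s) be a run (of some level-2 collapsible pushdown system) that passes the stack Pop₁(s), i.e. some configuration of ρ has stack Pop₁(s). If k < |s|−1, then ρ passes the stack Pop₂(s). -/
namespace CPG

/-! ## Level-2 collapsible pushdown stacks -/

/-- Stack letters: `Sum.inl σ` is a letter with a level-1 link,
`Sum.inr (σ, k)` is a letter with a level-2 link to the substack of width `k`. -/
abbrev Letter (A : Type) := A ⊕ (A × ℕ)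

def symOf {A : Type} : Letter A → A
  | Sum.inl a => a
  | Sum.inr (a, _) => a

def lvlOf {A : Type} : Letter A → ℕ
  | Sum.inl _ => 1
  | Sum.inr _ => 2

abbrev Word (A : Type) := List (Letter A)

/-- A 2-word: a list of words; the last word is the topmost one. -/
abbrev Stack2 (A : Type) := List (Word A)

/-- The initial level-2 stack `⊥₂`. -/
def bottom2 {A : Type} (bot : A) : Stack2 A := [[Sum.inl bot]]

def top2 {A : Type} (s : Stack2 A) : Option (Word A) := s.getLast?

def top1 {A : Type} (s : Stack2 A) : Option (Letter A) := s.getLast?.bind List.getLast?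

def symS {A : Type} (s : Stack2 A) : Option A := (top1 s).map symOf

def lvlS {A : Type} (s : Stack2 A) : Option ℕ := (top1 s).map lvlOf

def lnkS {A : Type} (s : Stack2 A) : Option ℕ :=
  match top1 s, top2 s with
  | some (Sum.inr (_, j)), _ => some j
  | some (Sum.inl _), some w => some (w.length - 1)
  | _, _ => none

def clone2 {A : Type} (s : Stack2 A) : Option (Stack2 A) :=
  (top2 s).map fun w => s ++ [w]

def push1 {A : Type} [DecidableEq A] (bot a : A) (s : Stack2 A) : Option (Stack2 A) :=
  if a = bot then none else (top2 s).map fun w => s.dropLast ++ [w ++ [Sum.inl a]]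

def push2 {A : Type} [DecidableEq A] (bot a : A) (s : Stack2 A) : Option (Stack2 A) :=
  if a = bot then none else
    (top2 s).map fun w => s.dropLast ++ [w ++ [Sum.inr (a, s.length - 1)]]

def pop2 {A : Type} (s : Stack2 A) : Option (Stack2 A) :=
  if 1 < s.length then some s.dropLast else none

def pop1 {A : Type} (s : Stack2 A) : Option (Stack2 A) :=
  match s.getLast? with
  | some w => if 1 < w.length then some (s.dropLast ++ [w.dropLast]) else none
  | none => none

def collapse {A : Type} (s : Stack2 A) : Option (Stack2 A) :=
  match top1 s with
  | some (Sum.inr (_, k)) => if 0 < k then some (s.take k) else none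
  | some (Sum.inl _) => pop1 s
  | none => none

/-- The level-2 stack operations. -/
inductive Op (A : Type) where
  | clone2 | pop1 | pop2 | collapse
  | push1 (a : A) | push2 (a : A)

def applyOp {A : Type} [DecidableEq A] (bot : A) : Op A → Stack2 A → Option (Stack2 A)
  | .clone2 => clone2
  | .pop1 => pop1
  | .pop2 => pop2
  | .collapse => collapse
  | .push1 a => push1 bot a
  | .push2 a => push2 bot a

/-- `Stacks(Σ)` : the smallest set containing `⊥₂` and closed under the operations. -/
inductive IsStack {A : Type} [DecidableEq A] (bot : A) : Stack2 A → Prop where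
  | base : IsStack bot (bottom2 bot)
  | step {s t : Stack2 A} (op : Op A) : IsStack bot s → applyOp bot op s = some t →
      IsStack bot t

/-- Iterated application of a partial stack operation. -/
def iter {A : Type} (f : Stack2 A → Option (Stack2 A)) : ℕ → Stack2 A → Option (Stack2 A)
  | 0, s => some s
  | n + 1, s => (f s).bind (iter f n)

/-- `t` is a substack of `s`: `t = Pop₁ⁿ(Pop₂ᵐ(s))`. -/
def Substack {A : Type} (t s : Stack2 A) : Prop :=
  ∃ n m, (iter pop2 m s).bind (iter pop1 n) = some t

def ProperSubstack {A : Type} (t s : Stack2 A) : Prop := Substack t s ∧ t ≠ s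

/-- `s` is a prefix of `t` (`s ⊑ t`). -/
def StackPrefix {A : Type} (s t : Stack2 A) : Prop :=
  s ≠ [] ∧ s.length ≤ t.length ∧ s.dropLast <+: t ∧
    ∀ j, s.length - 1 ≤ j → j < t.length → s.getLastD [] <+: t.getD j []

/-- `t[s/u]` : the stack obtained from `t` by replacing the prefix `s` by `u`. -/
def substPrefix {A : Type} (t s u : Stack2 A) : Stack2 A :=
  u.dropLast ++
    (t.drop (s.length - 1)).map fun v => u.getLastD [] ++ v.drop (s.getLastD []).length

/-! ## Collapsible pushdown systems and runs -/

/-- A level-2 collapsible pushdown system. -/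
structure CPS (Q A Γ : Type) where
  bot : A
  q0 : Q
  Δ : Set (Q × A × Γ × Q × Op A)

variable {Q A Γ : Type} [DecidableEq A]

/-- A `γ`-labelled transition realized by the operation `op`. -/
def TransOp (S : CPS Q A Γ) (γ : Γ) (op : Op A) (c c' : Q × Stack2 A) : Prop :=
  ∃ σ : A, symS c.2 = some σ ∧ (c.1, σ, γ, c'.1, op) ∈ S.Δ ∧
    applyOp S.bot op c.2 = some c'.2

def Trans (S : CPS Q A Γ) (γ : Γ) (c c' : Q × Stack2 A) : Prop :=
  ∃ op, TransOp S γ op c c'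

/-- A run of a collapsible pushdown system (recording configurations, labels and
operations of each step). -/
structure Run (S : CPS Q A Γ) where
  len : ℕ
  cfg : ℕ → Q × Stack2 A
  lab : ℕ → Γ
  op : ℕ → Op A
  ok : ∀ i, i < len → TransOp S (lab i) (op i) (cfg i) (cfg (i + 1))

def Run.stk {S : CPS Q A Γ} (ρ : Run S) (i : ℕ) : Stack2 A := (ρ.cfg i).2

/-- The word of labels along a run. -/
def Run.labels {S : CPS Q A Γ} (ρ : Run S) : List Γ :=
  List.ofFn fun i : Fin ρ.len => ρ.lab i

/-- `Reach_L`-reachability: a run from `c` to `c'` labelled by a word in `L`. -/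
def ReachL (S : CPS Q A Γ) (L : Language Γ) (c c' : Q × Stack2 A) : Prop :=
  ∃ ρ : Run S, ρ.cfg 0 = c ∧ ρ.cfg ρ.len = c' ∧ ρ.labels ∈ L

/-- Plain reachability. -/
def Reach (S : CPS Q A Γ) (c c' : Q × Stack2 A) : Prop :=
  ∃ ρ : Run S, ρ.cfg 0 = c ∧ ρ.cfg ρ.len = c'

/-! ## ε-contraction -/

def oneLetterLang (γ : Γ) : Language Γ := {[γ]}

def nonEpsLang (eps : Γ) : Language Γ := {w | ∃ γ : Γ, γ ≠ eps ∧ w = [γ]}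

/-- The language `{ε}*`. -/
def epsStar (eps : Γ) : Language Γ := KStar.kstar (oneLetterLang eps)

/-- The language `({ε}*(Γ∖{ε}))*`. -/
def domLang (eps : Γ) : Language Γ :=
  KStar.kstar (epsStar eps * nonEpsLang eps)

/-- The language `{ε}*γ`. -/
def edgeLang (eps γ : Γ) : Language Γ := epsStar eps * oneLetterLang γ

/-- The vertex set of the ε-contraction `G/ε`. -/
def EpsDomain (S : CPS Q A Γ) (eps : Γ) : Set (Q × Stack2 A) :=
  {c | ReachL S (domLang eps) (S.q0, bottom2 S.bot) c}

/-! ## (Generalised) milestones and the order ≪ -/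

/-- `wordAt bot s i` is the word `wᵢ` of `s`, with the convention `w₀ = ⊥`. -/
def wordAt {A : Type} (bot : A) (s : Stack2 A) (i : ℕ) : Word A :=
  if i = 0 then [Sum.inl bot] else s.getD (i - 1) []

/-- Longest common prefix of two words. -/
def lcp {α : Type} [DecidableEq α] : List α → List α → List α
  | a :: s, b :: t => if a = b then a :: lcp s t else []
  | _, _ => []

/-- `m` is a generalised milestone of `s`. -/
def GenMilestone (bot : A) (s m : Stack2 A) : Prop :=
  ∃ i v, i < s.length ∧ m = s.take i ++ [v] ∧
    lcp (wordAt bot s i) (wordAt bot s (i + 1)) <+: v ∧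
    (v <+: wordAt bot s i ∨ v <+: wordAt bot s (i + 1))

/-- `m` is a milestone of `s`. -/
def Milestone (bot : A) (s m : Stack2 A) : Prop :=
  ∃ i v, i < s.length ∧ m = s.take i ++ [v] ∧
    lcp (wordAt bot s i) (wordAt bot s (i + 1)) <+: v ∧
    v <+: wordAt bot s (i + 1)

def genMilestones (bot : A) (s : Stack2 A) : Set (Stack2 A) := {m | GenMilestone bot s m}

def milestones (bot : A) (s : Stack2 A) : Set (Stack2 A) := {m | Milestone bot s m}

/-- The base cases of the partial order `≪`. -/
def llBase (bot : A) (s t : Stack2 A) : Prop :=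
  s.length < t.length ∨
    (s ≠ [] ∧ s.length = t.length ∧ s.dropLast = t.dropLast ∧
      ((t.getLastD [] <+: s.getLastD [] ∧ t.getLastD [] ≠ s.getLastD [] ∧
          s.getLastD [] <+: wordAt bot s (s.length - 1)) ∨
        (s.getLastD [] <+: t.getLastD [] ∧ s.getLastD [] ≠ t.getLastD [] ∧
          ¬ t.getLastD [] <+: wordAt bot s (s.length - 1))))

/-- The order `≪`: the smallest reflexive transitive relation containing `llBase`. -/
def ll (bot : A) : Stack2 A → Stack2 A → Prop := Relation.ReflTransGen (llBase bot)

/-- `m'` is the ≪-successor of `m` within `genMilestones bot s`. -/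
def LlSuccessor (bot : A) (s m m' : Stack2 A) : Prop :=
  GenMilestone bot s m ∧ GenMilestone bot s m' ∧ m ≠ m' ∧ ll bot m m' ∧
    ∀ m'', GenMilestone bot s m'' → ll bot m m'' → m'' ≠ m → ll bot m' m''

/-! ## Loops, returns and 1-loops -/

/-- The segment `[i,j]` of `ρ` is a loop (of its initial stack). -/
def LoopSeg {S : CPS Q A Γ} (ρ : Run S) (i j : ℕ) : Prop :=
  i ≤ j ∧ j ≤ ρ.len ∧ ρ.stk j = ρ.stk i ∧
    (∀ k, i ≤ k → k ≤ j → ∀ t, pop2 (ρ.stk i) = some t → ¬ Substack (ρ.stk k) t) ∧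
    (∀ k, i ≤ k → k ≤ j → ∀ m, 0 < m → ∀ t, iter pop1 m (ρ.stk i) = some t →
      ρ.stk k = t → ∀ m', m' < m → ∃ t', iter pop1 m' (ρ.stk i) = some t' ∧
        lvlS t' = some 1)

/-- A high loop: a loop that never visits `Pop₁` of its stack. -/
def HighLoopSeg {S : CPS Q A Γ} (ρ : Run S) (i j : ℕ) : Prop :=
  LoopSeg ρ i j ∧ ∀ k, i ≤ k → k ≤ j → ∀ t, pop1 (ρ.stk i) = some t → ρ.stk k ≠ t

/-- A low loop: a loop whose second and second-to-last stacks are `Pop₁` of its stack. -/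
def LowLoopSeg {S : CPS Q A Γ} (ρ : Run S) (i j : ℕ) : Prop :=
  LoopSeg ρ i j ∧ i < j ∧
    ∃ t, pop1 (ρ.stk i) = some t ∧ ρ.stk (i + 1) = t ∧ ρ.stk (j - 1) = t

/-- The common part of the definition of a return on the segment `[i,j]`:
it leads from its initial stack `t` to `Pop₂(t)` and never visits a substack
of `Pop₂(t)` before its final configuration. -/
def RetShell {S : CPS Q A Γ} (ρ : Run S) (i j : ℕ) : Prop :=
  i < j ∧ j ≤ ρ.len ∧ pop2 (ρ.stk i) = some (ρ.stk j) ∧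
    ∀ k, i ≤ k → k < j → ¬ Substack (ρ.stk k) (ρ.stk j)

/-- The segment `[i,j]` of `ρ` is a return (from its initial stack `t` to `Pop₂(t)`). -/
inductive RetSeg {S : CPS Q A Γ} (ρ : Run S) : ℕ → ℕ → Prop where
  | pop2 {i j : ℕ} (h : RetShell ρ i j) (hop : ρ.op (j - 1) = Op.pop2) : RetSeg ρ i j
  | collapse {i j : ℕ} (h : RetShell ρ i j) (hop : ρ.op (j - 1) = Op.collapse)
      (hpre : ∃ w w', top2 (ρ.stk i) = some w ∧ top2 (ρ.stk (j - 1)) = some w' ∧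
        w <+: w' ∧ w ≠ w') : RetSeg ρ i j
  | sub {i k j : ℕ} (h : RetShell ρ i j) (hik : i < k) (hkj : k ≤ j)
      (hpop : pop1 (ρ.stk i) = some (ρ.stk k)) (hret : RetSeg ρ k j) : RetSeg ρ i j

/-- The segment `[i,j]` of `ρ` is a level-1-loop. -/
def OneLoopSeg {S : CPS Q A Γ} (ρ : Run S) (i j : ℕ) : Prop :=
  i ≤ j ∧ j ≤ ρ.len ∧
    ∃ (s : Stack2 A) (w : Word A) (s' : Stack2 A),
      ρ.stk i = s ++ [w] ∧ ρ.stk j = s ++ s' ++ [w] ∧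
      (∀ k, i ≤ k → k ≤ j → s.length < (ρ.stk k).length) ∧
      (∀ k, i ≤ k → k ≤ j → 1 < w.length → top2 (ρ.stk k) = some w.dropLast →
        ∃ m, k < m ∧ m ≤ j ∧ RetSeg ρ k m)

/-! ## ExRet, ExLoop, ... -/

/-- `w↓₀` : replace every level-2 link by `0`. -/
def down0 {A : Type} : Word A → Word A :=
  List.map fun a => match a with
    | Sum.inl x => Sum.inl x
    | Sum.inr (x, _) => Sum.inr (x, 0)

def ExRet (S : CPS Q A Γ) (w : Word A) : Set (Q × Q) :=
  {p | ∃ ρ : Run S, ρ.cfg 0 = (p.1, [down0 w, down0 w]) ∧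
    ρ.cfg ρ.len = (p.2, [down0 w]) ∧ RetSeg ρ 0 ρ.len}

def ExLoop (S : CPS Q A Γ) (w : Word A) : Set (Q × Q) :=
  {p | ∃ ρ : Run S, ρ.cfg 0 = (p.1, [down0 w]) ∧ ρ.cfg ρ.len = (p.2, [down0 w]) ∧
    LoopSeg ρ 0 ρ.len}

def ExHLoop (S : CPS Q A Γ) (w : Word A) : Set (Q × Q) :=
  {p | ∃ ρ : Run S, ρ.cfg 0 = (p.1, [down0 w]) ∧ ρ.cfg ρ.len = (p.2, [down0 w]) ∧
    HighLoopSeg ρ 0 ρ.len}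

def ExLLoop (S : CPS Q A Γ) (w : Word A) : Set (Q × Q) :=
  {p | ∃ ρ : Run S, ρ.cfg 0 = (p.1, [down0 w]) ∧ ρ.cfg ρ.len = (p.2, [down0 w]) ∧
    LowLoopSeg ρ 0 ρ.len}

def ExOneLoop (S : CPS Q A Γ) (w : Word A) : Set (Q × Q) :=
  {p | ∃ (ρ : Run S) (s' : Stack2 A), ρ.cfg 0 = (p.1, [down0 w]) ∧
    ρ.cfg ρ.len = (p.2, s' ++ [down0 w]) ∧ OneLoopSeg ρ 0 ρ.len}

/-! ## Finite binary trees -/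

/-- Finite binary trees with labels in `α` and optional left/right children. -/
inductive PTree (α : Type) where
  | node (a : α) (l r : Option (PTree α)) : PTree α

/-- The label of the node at address `d` (`false` = left/0, `true` = right/1). -/
def PTree.labelAt {α : Type} : PTree α → List Bool → Option α
  | .node a _ _, [] => some a
  | .node _ (some t) _, false :: d => t.labelAt d
  | .node _ none _, false :: _ => none
  | .node _ _ (some t), true :: d => t.labelAt d
  | .node _ _ none, true :: _ => none

def PTree.map {α β : Type} (f : α → β) : PTree α → PTree β
  | .node a l r =>
    .node (f a)
      (match l with | none => none | some t => some (t.map f))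
      (match r with | none => none | some t => some (t.map f))

/-- Convolution of two trees, with `none` as padding symbol `□`. -/
def PTree.conv {α β : Type} : PTree α → PTree β → PTree (Option α × Option β)
  | .node a l r, .node b l' r' =>
    .node (some a, some b)
      (match l, l' with
        | none, none => none
        | some t, none => some (t.map fun x => (some x, none))
        | none, some u => some (u.map fun x => (none, some x))
        | some t, some u => some (PTree.conv t u))
      (match r, r' with
        | none, none => none
        | some t, none => some (t.map fun x => (some x, none))
        | none, some u => some (u.map fun x => (none, some x))
        | some t, some u => some (PTree.conv t u))

/-- A (bottom-up nondeterministic) finite tree automaton. -/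
structure TreeAut (α : Type) where
  St : Type
  fin : Finite St
  qI : St
  F : Set St
  Δ : Set (St × α × St × St)

/-- Acceptance of a finite tree by a tree automaton. -/
def TreeAut.Accepts {α : Type} (M : TreeAut α) (t : PTree α) : Prop :=
  ∃ ρ : List Bool → M.St,
    (∀ d, t.labelAt d = none → ρ d = M.qI) ∧
    (∀ d a, t.labelAt d = some a → (ρ d, a, ρ (d ++ [false]), ρ (d ++ [true])) ∈ M.Δ) ∧
    ρ [] ∈ M.F

/-- A family of binary relations on `B` is tree-automatic. -/
def IsTreeAutomatic {B : Type} {I : Type} (E : I → B → B → Prop) : Prop :=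
  ∃ (α : Type) (_ : Finite α) (AB : TreeAut α) (AE : I → TreeAut (Option α × Option α))
    (f : {t : PTree α // AB.Accepts t} → B),
    Function.Bijective f ∧
      ∀ (i : I) (t₁ t₂ : {t : PTree α // AB.Accepts t}),
        (AE i).Accepts (PTree.conv t₁.1 t₂.1) ↔ E i (f t₁) (f t₂)

/-! ## The encoding of configurations as trees -/

/-- Labels of encoding trees: a state, a pair (symbol, link level), or `ε`. -/
abbrev EncLabel (Q A : Type) := Q ⊕ ((A × ℕ) ⊕ Unit)

def epsLab {Q A : Type} : EncLabel Q A := Sum.inr (Sum.inr ())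

def symLab {Q A : Type} (τ : Letter A) : EncLabel Q A := Sum.inr (Sum.inl (symOf τ, lvlOf τ))

/-- Encoding of blocklines as trees (with a fuel parameter driving the recursion;
the fuel used in `encStack` is large enough so that it never runs out on actual
blocklines). The left subtree encodes the blockline induced by the first maximal
block, the right subtree the remaining blocks. -/
def encBL (Q : Type) {A : Type} [DecidableEq A] :
    ℕ → EncLabel Q A → List (Word A) → PTree (EncLabel Q A)
  | 0, σ, _ => .node σ none none
  | _ + 1, σ, [] => .node σ none none
  | fuel + 1, σ, w :: rest =>
    if w.length ≤ 1 then
      match rest with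
      | [] => .node σ none none
      | _ :: _ => .node σ none (some (encBL Q fuel epsLab rest))
    else
      let p : Word A → Bool := fun v => decide (v.take 2 = w.take 2)
      let blk := (w :: rest).takeWhile p
      let restBlk := (w :: rest).dropWhile p
      .node σ
        (some (encBL Q fuel
          (match w[1]? with | some τ' => symLab τ' | none => epsLab)
          (blk.map List.tail)))
        (match restBlk with
          | [] => none
          | _ :: _ => some (encBL Q fuel epsLab restBlk))

/-- The total number of letters of a 2-word. -/
def size2 {A : Type} (s : Stack2 A) : ℕ := (s.map List.length).sum

/-- The encoding `Enc(s) = Enc(s, (⊥,1))` of a stack. -/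
def encStack (Q : Type) {A : Type} [DecidableEq A] (bot : A) (s : Stack2 A) :
    PTree (EncLabel Q A) :=
  encBL Q (size2 s + 1) (Sum.inr (Sum.inl (bot, 1))) s

/-- The encoding of a configuration: the state at the root, `Enc(s)` as left subtree. -/
def Enc {Q A : Type} [DecidableEq A] (bot : A) (c : Q × Stack2 A) : PTree (EncLabel Q A) :=
  .node (Sum.inl c.1) (some (encStack Q bot c.2)) none

/-- The class `EncTrees` of encoding trees. -/
def EncTrees (Q A : Type) (bot : A) : Set (PTree (EncLabel Q A)) :=
  {T | (∃ q : Q, T.labelAt [] = some (Sum.inl q)) ∧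
    T.labelAt [true] = none ∧ T.labelAt [false] ≠ none ∧
    T.labelAt [false] = some (Sum.inr (Sum.inl (bot, 1))) ∧
    (∀ (d : List Bool) (x : EncLabel Q A),
      T.labelAt (false :: (d ++ [false])) = some x →
        ∃ (σ : A) (l : ℕ), σ ≠ bot ∧ (l = 1 ∨ l = 2) ∧ x = Sum.inr (Sum.inl (σ, l))) ∧
    (∀ (d : List Bool) (x : EncLabel Q A), T.labelAt (d ++ [true]) = some x → x = epsLab) ∧
    (∀ (d : List Bool) (σ : A), ¬ (T.labelAt (d ++ [false]) = some (Sum.inr (Sum.inl (σ, 1))) ∧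
      T.labelAt (d ++ [true, false]) = some (Sum.inr (Sum.inl (σ, 1)))))}

/-- Restriction of a tree to the nodes lexicographically ≤ `d`. -/
def restrictLex {α : Type} : PTree α → List Bool → PTree α
  | .node a _ _, [] => .node a none none
  | .node a l _, false :: d =>
      .node a (match l with | none => none | some t => some (restrictLex t d)) none
  | .node a l r, true :: d =>
      .node a l (match r with | none => none | some t => some (restrictLex t d))

/-- The lexicographic order on tree addresses. -/
def lexLe (d e : List Bool) : Prop :=
  d <+: e ∨ ∃ (c x y : List Bool), d = c ++ false :: x ∧ e = c ++ true :: y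

/-! ## Deterministic finite automata with output (Moore machines) -/

structure Moore (α ω : Type) where
  St : Type
  fin : Finite St
  init : St
  step : St → α → St
  out : St → ω

def Moore.output {α ω : Type} (M : Moore α ω) (w : List α) : ω :=
  M.out (w.foldl M.step M.init)

/-!
Suppose a run goes from `Pop₁(s)` to `s` without meeting `u = Pop₂(s)`. The stack `u` can be built
up to `s` only by way of `u` itself, so reading the run backwards from `s` every stack properly
extends `u`. Meanwhile a level-2 link created above `u` points to width at least `|u|`; hence the
topmost link of `s`, which points strictly below `|u|`, is never created on the way but only
copied, at the same position inside its word. So some word of `Pop₁(s)` above `u` would carry this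
link already; but the only such word is `TOP₂(s)` shortened by precisely that letter.
-/

/-- The possible effects of one stack operation, with its side conditions forgotten:
`StackStep t t'` over-approximates `∃ op, applyOp bot op t = some t'`. The constructor `cut` covers
both `Pop₂` and the collapse of a level-2 link. -/
inductive StackStep {A : Type} : Stack2 A → Stack2 A → Prop
  | clone (r : Stack2 A) (x : Word A) : StackStep (r ++ [x]) (r ++ [x] ++ [x])
  | push1 (r : Stack2 A) (x : Word A) (a : A) :
      StackStep (r ++ [x]) (r ++ [x ++ [Sum.inl a]])
  | push2 (r : Stack2 A) (x : Word A) (a : A) :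
      StackStep (r ++ [x]) (r ++ [x ++ [Sum.inr (a, r.length)]])
  | pop1 (r : Stack2 A) (x : Word A) : StackStep (r ++ [x]) (r ++ [x.dropLast])
  | cut (t : Stack2 A) (m : ℕ) : StackStep t (t.take m)

theorem exists_mem_drop_concat {α : Type*} {l : List α} {a : α} {n : ℕ} {P : α → Prop}
    (hn : n ≤ l.length) :
    (∃ b ∈ (l ++ [a]).drop n, P b) ↔ (∃ b ∈ l.drop n, P b) ∨ P a := by
  simp [List.drop_append_of_le_length hn, or_and_right, exists_or]

theorem getElem?_eq_some_of_concat_of_ne {α : Type*} {l : List α} {a b : α} {p : ℕ}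
    (h : (l ++ [b])[p]? = some a) (hba : b ≠ a) : l[p]? = some a := by
  grind

theorem pop1_concat_eq_some_iff {A : Type} {r t : Stack2 A} {x : Word A} :
    pop1 (r ++ [x]) = some t ↔ 1 < x.length ∧ r ++ [x.dropLast] = t := by
  simp [pop1]

theorem pop2_concat {A : Type} {u : Stack2 A} (hu : u ≠ []) (x : Word A) :
    pop2 (u ++ [x]) = some u := by
  simp [pop2, hu, List.length_pos_iff]

theorem stackStep_of_applyOp {A : Type} [DecidableEq A] {bot : A} {op : Op A} {t t' : Stack2 A}
    (h : applyOp bot op t = some t') : StackStep t t' := by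
  rcases List.eq_nil_or_concat' t with rfl | ⟨r, x, rfl⟩
  · cases op <;> simp [applyOp, clone2, pop1, pop2, collapse, push1, push2, top1, top2] at h
  have step_of_pop1 (h : pop1 (r ++ [x]) = some t') : StackStep (r ++ [x]) t' :=
    (pop1_concat_eq_some_iff.1 h).2 ▸ .pop1 r x
  cases op with
  | clone2 =>
    obtain rfl : r ++ [x] ++ [x] = t' := by simpa [applyOp, clone2, top2] using h
    exact .clone r x
  | pop1 => exact step_of_pop1 h
  | pop2 =>
    obtain ⟨-, rfl⟩ : _ ∧ (r ++ [x]).dropLast = t' := by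
      simpa only [applyOp, pop2, Option.ite_none_right_eq_some, Option.some.injEq] using h
    exact List.dropLast_eq_take ▸ .cut _ _
  | collapse =>
    simp only [applyOp, collapse] at h
    split at h
    · obtain ⟨-, rfl⟩ : _ ∧ (r ++ [x]).take _ = t' := by
        simpa only [Option.ite_none_right_eq_some, Option.some.injEq] using h
      exact .cut _ _
    · exact step_of_pop1 h
    · contradiction
  | push1 a =>
    obtain ⟨-, rfl⟩ : _ ∧ r ++ [x ++ [Sum.inl a]] = t' := by
      simpa [applyOp, push1, top2] using h
    exact .push1 r x a
  | push2 a =>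
    obtain ⟨-, rfl⟩ : _ ∧ r ++ [x ++ [Sum.inr (a, r.length)]] = t' := by
      simpa [applyOp, push2, top2] using h
    exact .push2 r x a

theorem StackStep.dropLast_isPrefix {A : Type} {t t' : Stack2 A} (h : StackStep t t') :
    t'.dropLast <+: t := by
  cases h with
  | cut m => exact (List.dropLast_prefix _).trans (List.take_prefix _ _)
  | _ => simp

theorem StackStep.exists_link_mem_drop {A : Type} {t t' : Stack2 A} (h : StackStep t t')
    {n p k : ℕ} {σ : A} (hk : k < n) (hn : n < t.length)
    (h' : ∃ w ∈ t'.drop n, w[p]? = some (Sum.inr (σ, k))) :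
    ∃ w ∈ t.drop n, w[p]? = some (Sum.inr (σ, k)) := by
  have of_top {r : Stack2 A} {x y : Word A} (hr : n < (r ++ [x]).length)
      (hyx : y[p]? = some (Sum.inr (σ, k)) → x[p]? = some (Sum.inr (σ, k)))
      (hy : ∃ w ∈ (r ++ [y]).drop n, w[p]? = some (Sum.inr (σ, k))) :
      ∃ w ∈ (r ++ [x]).drop n, w[p]? = some (Sum.inr (σ, k)) := by
    have hnr : n ≤ r.length := by simpa [Nat.lt_succ_iff] using hr
    rw [exists_mem_drop_concat hnr] at hy ⊢
    exact hy.imp_right hyx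
  cases h with
  | clone r x =>
    have hnr : n ≤ r.length := by simpa [Nat.lt_succ_iff] using hn
    rcases (exists_mem_drop_concat hn.le).1 h' with hold | hcopy
    · exact hold
    · exact (exists_mem_drop_concat hnr).2 (.inr hcopy)
  | push1 r x a => exact of_top hn (getElem?_eq_some_of_concat_of_ne · Sum.inl_ne_inr) h'
  | push2 r x a =>
    have new_link_ne : (Sum.inr (a, r.length) : Letter A) ≠ Sum.inr (σ, k) := by
      have hnr : n ≤ r.length := by simpa [Nat.lt_succ_iff] using hn
      have hlink : r.length ≠ k := (hk.trans_le hnr).ne'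
      simp [hlink]
    exact of_top hn (getElem?_eq_some_of_concat_of_ne · new_link_ne) h'
  | pop1 r x => exact of_top hn (by grind) h'
  | cut m =>
    obtain ⟨w, hw, hwp⟩ := h'
    exact ⟨w, List.mem_of_mem_take (List.drop_take ▸ hw), hwp⟩

/-- The stack `t` extends `u` by words one of which carries the letter `(σ, 2, k)` at position `p`.
For `k < u.length` this is a property that a run cannot acquire without passing `u`. Position `0` is
the bottom letter of a word. -/
def HasLinkAbove {A : Type} (u : Stack2 A) (p : ℕ) (σ : A) (k : ℕ) (t : Stack2 A) : Prop :=
  ∃ v, t = u ++ v ∧ ∃ w ∈ v, w[p]? = some (Sum.inr (σ, k))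

theorem hasLinkAbove_concat_iff {A : Type} {u : Stack2 A} {p k : ℕ} {σ : A} {x : Word A} :
    HasLinkAbove u p σ k (u ++ [x]) ↔ x[p]? = some (Sum.inr (σ, k)) := by
  simp [HasLinkAbove]

theorem StackStep.eq_or_hasLinkAbove {A : Type} {t t' u : Stack2 A} (h : StackStep t t')
    {p k : ℕ} {σ : A} (hk : k < u.length) (ht' : HasLinkAbove u p σ k t') :
    t = u ∨ HasLinkAbove u p σ k t := by
  obtain ⟨v', rfl, hlink⟩ := ht'
  have hv' : v' ≠ [] := by
    rintro rfl
    simp at hlink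
  obtain ⟨v, rfl⟩ : u <+: t := by
    refine .trans ?_ h.dropLast_isPrefix
    rw [List.dropLast_append_of_ne_nil hv']
    exact List.prefix_append _ _
  rcases eq_or_ne v [] with rfl | hv
  · exact .inl (List.append_nil u)
  have hlen : u.length < (u ++ v).length := by simpa [List.length_pos_iff] using hv
  have hlink' := h.exists_link_mem_drop hk hlen (p := p) (σ := σ) (by simpa using hlink)
  exact .inr ⟨v, rfl, by simpa using hlink'⟩

theorem Run.stackStep {Q A Γ : Type} [DecidableEq A] {S : CPS Q A Γ} (ρ : Run S) {i : ℕ}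
    (hi : i < ρ.len) : StackStep (ρ.stk i) (ρ.stk (i + 1)) :=
  let ⟨_, _, _, hop⟩ := ρ.ok i hi
  stackStep_of_applyOp hop

theorem Run.exists_stk_eq_or_hasLinkAbove {Q A Γ : Type} [DecidableEq A] {S : CPS Q A Γ}
    (ρ : Run S) {u : Stack2 A} {p k : ℕ} {σ : A} (hk : k < u.length) {i j : ℕ} (hij : i ≤ j)
    (hj : j ≤ ρ.len) (hlink : HasLinkAbove u p σ k (ρ.stk j)) :
    (∃ m, i ≤ m ∧ m ≤ j ∧ ρ.stk m = u) ∨ HasLinkAbove u p σ k (ρ.stk i) := by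
  induction hij using Nat.decreasingInduction with
  | self => exact .inr hlink
  | of_succ i hi ih =>
    rcases ih with ⟨m, him, hmj, hm⟩ | hi'
    · exact .inl ⟨m, Nat.le_of_succ_le him, hmj, hm⟩
    · exact ((ρ.stackStep (hi.trans_le hj)).eq_or_hasLinkAbove hk hi').imp_left
        fun hiu => ⟨i, le_rfl, hi.le, hiu⟩

theorem run_passing_pop1_passes_pop2_general {Q A Γ : Type} [DecidableEq A] {S : CPS Q A Γ}
    (ρ : Run S) {i j : ℕ} (hij : i ≤ j) (hj : j ≤ ρ.len) {σ : A} {k : ℕ}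
    (htop : top1 (ρ.stk j) = some (Sum.inr (σ, k))) (hpop : pop1 (ρ.stk j) = some (ρ.stk i))
    (hk : k < (ρ.stk j).length - 1) :
    ∃ m, i ≤ m ∧ m ≤ j ∧ pop2 (ρ.stk j) = some (ρ.stk m) := by
  obtain ⟨u, x, hs⟩ : ∃ u x, ρ.stk j = u ++ [x] :=
    (List.eq_nil_or_concat' _).resolve_left fun hnil => by simp [hnil, top1] at htop
  rw [hs] at htop hpop hk ⊢
  have hku : k < u.length := by simpa using hk
  have hlink : HasLinkAbove u (x.length - 1) σ k (ρ.stk j) := by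
    rw [hs, hasLinkAbove_concat_iff, ← List.getLast?_eq_getElem?]
    simpa [top1] using htop
  have hnolink : ¬ HasLinkAbove u (x.length - 1) σ k (ρ.stk i) := by
    rw [← (pop1_concat_eq_some_iff.1 hpop).2, hasLinkAbove_concat_iff]
    simp
  obtain ⟨m, him, hmj, hm⟩ :=
    (ρ.exists_stk_eq_or_hasLinkAbove hku hij hj hlink).resolve_right hnolink
  exact ⟨m, him, hmj, hm.symm ▸ pop2_concat (List.ne_nil_of_length_pos (Nat.zero_lt_of_lt hku)) x⟩

/-- If `TOP₁(s) = (σ,2,k)` with `k < |s| − 1` and `ρ ∈ Runs(s,s)`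
passes `Pop₁(s)`, then `ρ` passes `Pop₂(s)`. -/
theorem run_passing_pop1_passes_pop2
    {Q A Γ : Type} [DecidableEq A] (S : CPS Q A Γ)
    (s : Stack2 A) (hs : IsStack S.bot s)
    (σ : A) (k : ℕ) (htop : top1 s = some (Sum.inr (σ, k)))
    (ρ : Run S) (h0 : ρ.stk 0 = s) (hlast : ρ.stk ρ.len = s)
    (t₁ : Stack2 A) (hp : pop1 s = some t₁)
    (hvisit : ∃ i, i ≤ ρ.len ∧ ρ.stk i = t₁)
    (hk : k < s.length - 1) :
    ∃ t₂, pop2 s = some t₂ ∧ ∃ i, i ≤ ρ.len ∧ ρ.stk i = t₂ := by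
  obtain ⟨i, hi, hit⟩ := hvisit
  subst hlast hit
  obtain ⟨m, -, hm, hpop2⟩ := run_passing_pop1_passes_pop2_general ρ hi le_rfl htop hp hk
  exact ⟨_, hpop2, m, hm, rfl⟩

end CPG
end

section
/- Let s be a level-2 stack and m₁ ∈ Milestones(s). Every run ρ ∈ Runs(m₁,s) whose configurations after the initial one never have a stack that is a substack of m₁ decomposes as ρ = ρ₁∘λ₁∘⋯∘ρ_n∘λ_n, where each λ_i is a loop and each ρ_i has length 1 and connects a generalised milestone of s with its ≪-successor in genMilestones(s). In particular, for t = Pop₂ᵏ(s) and configurations c=(q,t), c'=(q',s), a run ρ ∈ Runs(c,c') witnesses (c,c') ∈ R_→ if and only if it decomposes in this way. -/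
namespace CPG

variable {Q A Γ : Type} [DecidableEq A]

/-- A decomposition `ρ = ρ₁∘λ₁∘⋯∘ρ_n∘λ_n` where each `ρ_i` has length 1 and connects a
generalised milestone of `s` with its `≪`-successor and each `λ_i` is a loop. -/
def LoopDecomp {Q A Γ : Type} [DecidableEq A] {S : CPS Q A Γ} (ρ : Run S)
    (bot : A) (s : Stack2 A) : Prop :=
  ∃ (n : ℕ) (idx : ℕ → ℕ), idx 0 = 0 ∧ idx (2 * n) = ρ.len ∧
    (∀ i, i < 2 * n → idx i ≤ idx (i + 1)) ∧
    ∀ i, i < n → idx (2 * i + 1) = idx (2 * i) + 1 ∧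
      LlSuccessor bot s (ρ.stk (idx (2 * i))) (ρ.stk (idx (2 * i + 1))) ∧
      LoopSeg ρ (idx (2 * i + 1)) (idx (2 * i + 2))

/-!
A stack operation changes the word directly above a fixed stack `r` by at most one letter, and only
while this word is topmost. Hence a run that stays above `r` has to visit `r ++ [p]` when the word
above `r` gains the prefix `p`, and to visit `r ++ [q]` when it loses a prefix `q ++ [c]`.

Split the run at its last visits of generalised milestones. The operation that leaves a last visit
must lead to the `≪`-successor: a letter that is pushed without belonging to `s`, or popped although
it belongs to `s`, would have to be popped or pushed back, which visits the milestone once more.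

The part of the run from the arrival at a milestone to its last visit is a loop. Every letter that
it pops in between is pushed back, and a pushed level-2 letter has a link to the current width.
After a clone or a pop, the topmost word is shared with the word below and has only smaller links,
so no level-2 letter is popped. After a push, no letter is popped at all, since that would lead back
to the preceding milestone.
-/

/-! ## Words -/

section Words

variable {α : Type} {u v v' w x y z : List α} {c : α}

theorem prefix_of_ne_of_concat_prefix (hvx : v <+: x) (hne : x ≠ v) (hx : x <+: w)
    (hvc : v ++ [c] <+: w) : v ++ [c] <+: x := by
  rcases List.prefix_or_prefix_of_prefix hvc hx with h | h
  · exact h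
  · rcases List.prefix_concat_iff.1 h with rfl | h
    · exact List.prefix_rfl
    · exact absurd (h.eq_of_length_le hvx.length_le) hne

/-- The order `≪` between the stacks `r ++ [v]` and `r ++ [v']`, where `u` is the topmost word of
`r`: it descends along the prefixes of `u` and then ascends outside of them. -/
def RowLE (u v v' : List α) : Prop :=
  v' <+: v ∧ v <+: u ∨ ¬ v' <+: u ∧ (v <+: u ∨ v <+: v')

theorem RowLE.refl (u v : List α) : RowLE u v v := by
  by_cases h : v <+: u
  · exact Or.inl ⟨List.prefix_rfl, h⟩
  · exact Or.inr ⟨h, Or.inr List.prefix_rfl⟩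

theorem RowLE.trans (h : RowLE u v v') (h' : RowLE u v' w) : RowLE u v w := by
  rcases h with ⟨h₁, h₂⟩ | ⟨h₁, h₂⟩ <;> rcases h' with ⟨h₃, h₄⟩ | ⟨h₃, h₄⟩
  · exact Or.inl ⟨h₃.trans h₁, h₂⟩
  · exact Or.inr ⟨h₃, Or.inl h₂⟩
  · exact absurd h₄ h₁
  · exact Or.inr ⟨h₃, h₂.imp_right fun h => h.trans (h₄.resolve_left h₁)⟩

theorem RowLE.self_left (u v : List α) : RowLE u u v := by
  by_cases h : v <+: u
  · exact Or.inl ⟨h, List.prefix_rfl⟩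
  · exact Or.inr ⟨h, Or.inl List.prefix_rfl⟩

theorem RowLE.of_concat (hvc : v ++ [c] <+: u) (h : RowLE u (v ++ [c]) x) (hne : x ≠ v ++ [c]) :
    RowLE u v x := by
  have hvu : v <+: u := (List.prefix_append _ _).trans hvc
  rcases h with ⟨hx, -⟩ | ⟨hx, -⟩
  · exact Or.inl ⟨(List.prefix_concat_iff.1 hx).resolve_left hne, hvu⟩
  · exact Or.inr ⟨hx, Or.inl hvu⟩

variable [DecidableEq α]

theorem prefix_lcp_iff : z <+: lcp x y ↔ z <+: x ∧ z <+: y := by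
  induction x generalizing y z with
  | nil => cases y <;> simp +contextual [lcp]
  | cons a x ih =>
    rcases y with - | ⟨b, y⟩
    · simp +contextual [lcp]
    · rcases z with - | ⟨c, z⟩
      · simp
      · by_cases hab : a = b <;> simp only [lcp, hab, if_true, if_false, List.cons_prefix_cons, ih,
          List.prefix_nil] <;> grind

theorem lcp_prefix_left (x y : List α) : lcp x y <+: x :=
  (prefix_lcp_iff.1 List.prefix_rfl).1

theorem lcp_prefix_right (x y : List α) : lcp x y <+: y :=
  (prefix_lcp_iff.1 List.prefix_rfl).2

/-- The words `v` for which `r ++ [v]` is a generalised milestone of a stack that extends `r` by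
the word `w`, where `u` is the topmost word of `r`. -/
def InRow (u w v : List α) : Prop := lcp u w <+: v ∧ (v <+: u ∨ v <+: w)

theorem InRow.left (u w : List α) : InRow u w u := ⟨lcp_prefix_left _ _, Or.inl List.prefix_rfl⟩

theorem InRow.right (u w : List α) : InRow u w w :=
  ⟨lcp_prefix_right _ _, Or.inr List.prefix_rfl⟩

theorem RowLE.eq_or_prefix (hv : v <+: w) (hx : InRow u w x) (h : RowLE u v x) :
    x = v ∨ ¬ x <+: u ∧ v <+: x := by
  have hvx (hvu : v <+: u) : v <+: x := (prefix_lcp_iff.2 ⟨hvu, hv⟩).trans hx.1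
  rcases h with ⟨hxv, hvu⟩ | ⟨hxu, h⟩
  · exact Or.inl (hxv.eq_of_length_le (hvx hvu).length_le)
  · exact Or.inr ⟨hxu, h.elim hvx id⟩

theorem InRow.eq_of_rowLE (hx : InRow u w x) (h : RowLE u w x) : x = w := by
  rcases h.eq_or_prefix List.prefix_rfl hx with rfl | ⟨hxu, hwx⟩
  · rfl
  · exact (hx.2.resolve_left hxu).eq_of_length_le hwx.length_le

theorem InRow.rowLE_concat (hvc : v ++ [c] <+: w) (hx : InRow u w x) (h : RowLE u v x)
    (hne : x ≠ v) : RowLE u (v ++ [c]) x := by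
  obtain ⟨hxu, hvx⟩ :=
    (h.eq_or_prefix ((List.prefix_append _ _).trans hvc) hx).resolve_left hne
  exact Or.inr ⟨hxu, Or.inr (prefix_of_ne_of_concat_prefix hvx hne (hx.2.resolve_left hxu) hvc)⟩

theorem InRow.concat (h : InRow u w v) (hvc : v ++ [c] <+: w) : InRow u w (v ++ [c]) :=
  ⟨h.1.trans (List.prefix_append _ _), Or.inr hvc⟩

end Words

/-! ## The order on generalised milestones -/

section Order

variable {α : Type} {bot : α} {r s t : Stack2 α} {v v' : Word α} {i j : ℕ}

theorem wordAt_append (h : i ≤ r.length) (y : Stack2 α) :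
    wordAt bot (r ++ y) i = wordAt bot r i := by
  unfold wordAt
  split_ifs with h0
  · rfl
  · exact List.getD_append _ _ _ _ (by omega)

theorem wordAt_take (h : i ≤ s.length) : wordAt bot (s.take i) i = wordAt bot s i := by
  conv_rhs => rw [← List.take_append_drop i s, wordAt_append (by simpa using h)]

theorem take_succ_eq_take_concat_wordAt (hi : i < s.length) :
    s.take (i + 1) = s.take i ++ [wordAt bot s (i + 1)] := by
  rw [wordAt, if_neg i.succ_ne_zero, Nat.add_sub_cancel, List.getD_eq_getElem _ _ hi,
    List.take_succ_eq_append_getElem hi]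

theorem length_take_concat (hi : i < s.length) : (s.take i ++ [v]).length = i + 1 := by
  simp [hi.le]

theorem take_concat_inj (hi : i < s.length) (hj : j < s.length) :
    s.take i ++ [v] = s.take j ++ [v'] ↔ i = j ∧ v = v' := by
  refine ⟨fun h => ?_, fun ⟨hij, hv⟩ => by rw [hij, hv]⟩
  have hlen := congrArg List.length h
  rw [length_take_concat hi, length_take_concat hj] at hlen
  exact ⟨by omega, (List.append_singleton_inj.1 h).2⟩

theorem llBase_concat_iff :
    llBase bot (r ++ [v]) t ↔ r.length + 1 < t.length ∨ ∃ v', t = r ++ [v'] ∧ v ≠ v' ∧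
      (v' <+: v ∧ v <+: wordAt bot r r.length ∨ v <+: v' ∧ ¬ v' <+: wordAt bot r r.length) := by
  rcases List.eq_nil_or_concat' t with rfl | ⟨r', v', rfl⟩
  · simp [llBase]
  · simp only [llBase, List.length_append, List.length_singleton, List.dropLast_concat,
      Nat.add_sub_cancel, wordAt_append le_rfl, List.append_singleton_inj, List.getLastD_concat]
    constructor
    · rintro (h | ⟨-, -, rfl, h | h⟩)
      · exact Or.inl (by omega)
      · exact Or.inr ⟨v', ⟨rfl, rfl⟩, h.2.1.symm, Or.inl ⟨h.1, h.2.2⟩⟩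
      · exact Or.inr ⟨v', ⟨rfl, rfl⟩, h.2.1, Or.inr ⟨h.1, h.2.2⟩⟩
    · rintro (h | ⟨_, ⟨rfl, rfl⟩, hne, h | h⟩)
      · exact Or.inl (by omega)
      · exact Or.inr ⟨by simp, rfl, rfl, Or.inl ⟨h.1, hne.symm, h.2⟩⟩
      · exact Or.inr ⟨by simp, rfl, rfl, Or.inr ⟨h.1, hne, h.2⟩⟩

theorem ll.length_le (h : ll bot s t) : s.length ≤ t.length := by
  induction h with
  | refl => exact le_rfl
  | tail _ h ih => exact ih.trans (h.elim le_of_lt fun h => h.2.1.le)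

theorem RowLE.of_ll (h : ll bot (r ++ [v]) t) (ht : t.length = r.length + 1) :
    ∃ v', t = r ++ [v'] ∧ RowLE (wordAt bot r r.length) v v' := by
  induction h with
  | refl => exact ⟨v, rfl, RowLE.refl _ _⟩
  | @tail t' t hst h ih =>
    have h₁ := ll.length_le hst
    have h₂ := ll.length_le (.single h)
    obtain ⟨v₁, rfl, hle⟩ := ih (by simp at h₁; omega)
    obtain hlt | ⟨v₂, rfl, -, h | h⟩ := llBase_concat_iff.1 h
    · omega
    · exact ⟨v₂, rfl, hle.trans (Or.inl h)⟩
    · exact ⟨v₂, rfl, hle.trans (Or.inr ⟨h.2, Or.inr h.1⟩)⟩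

theorem ll_concat_iff :
    ll bot (r ++ [v]) (r ++ [v']) ↔ RowLE (wordAt bot r r.length) v v' := by
  constructor
  · intro h
    obtain ⟨v₁, hv₁, hle⟩ := RowLE.of_ll h (by simp)
    obtain rfl : v' = v₁ := by simpa using hv₁
    exact hle
  have down {x y : Word α} (hyx : y <+: x) (hx : x <+: wordAt bot r r.length) :
      ll bot (r ++ [x]) (r ++ [y]) := by
    rcases eq_or_ne x y with rfl | hne
    · exact .refl
    · exact .single (llBase_concat_iff.2 (Or.inr ⟨y, rfl, hne, Or.inl ⟨hyx, hx⟩⟩))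
  have up {x y : Word α} (hxy : x <+: y) (hy : ¬ y <+: wordAt bot r r.length) :
      ll bot (r ++ [x]) (r ++ [y]) := by
    rcases eq_or_ne x y with rfl | hne
    · exact .refl
    · exact .single (llBase_concat_iff.2 (Or.inr ⟨y, rfl, hne, Or.inr ⟨hxy, hy⟩⟩))
  rintro (⟨h, hv⟩ | ⟨hv', hv | h⟩)
  · exact down h hv
  · -- The intermediate `r ++ [[]]` is no genuine stack, but `≪` relates all 2-words.
    exact (down v.nil_prefix hv).trans (up v'.nil_prefix hv')
  · exact up h hv'

theorem ll_take_concat_iff (hi : i < s.length) (hj : j < s.length) :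
    ll bot (s.take i ++ [v]) (s.take j ++ [v']) ↔
      i < j ∨ i = j ∧ RowLE (wordAt bot s i) v v' := by
  have hrow : ll bot (s.take i ++ [v]) (s.take i ++ [v']) ↔ RowLE (wordAt bot s i) v v' := by
    rw [ll_concat_iff, List.length_take_of_le hi.le, wordAt_take hi.le]
  constructor
  · intro h
    have hle := h.length_le
    rw [length_take_concat hi, length_take_concat hj] at hle
    rcases Nat.lt_or_eq_of_le (Nat.le_of_succ_le_succ hle) with hij | rfl
    · exact Or.inl hij
    · exact Or.inr ⟨rfl, hrow.1 h⟩
  · rintro (hij | ⟨rfl, h⟩)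
    · refine .single (Or.inl ?_)
      rw [length_take_concat hi, length_take_concat hj]
      omega
    · exact hrow.2 h

end Order

section Milestones

variable {bot : A} {s m : Stack2 A} {v v' : Word A} {c : Letter A} {i : ℕ}

theorem Milestone.genMilestone (h : Milestone bot s m) : GenMilestone bot s m := by
  obtain ⟨i, v, hi, hm, hlcp, hv⟩ := h
  exact ⟨i, v, hi, hm, hlcp, Or.inr hv⟩

theorem genMilestone_take (hi : i < s.length) : GenMilestone bot s (s.take (i + 1)) :=
  ⟨i, _, hi, take_succ_eq_take_concat_wordAt hi, InRow.right _ _⟩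

theorem llSuccessor_of_rowLE (hi : i < s.length)
    (hv : InRow (wordAt bot s i) (wordAt bot s (i + 1)) v)
    (hv' : InRow (wordAt bot s i) (wordAt bot s (i + 1)) v') (hne : v ≠ v')
    (hle : RowLE (wordAt bot s i) v v')
    (hsucc : ∀ x, InRow (wordAt bot s i) (wordAt bot s (i + 1)) x → RowLE (wordAt bot s i) v x →
      x ≠ v → RowLE (wordAt bot s i) v' x) :
    LlSuccessor bot s (s.take i ++ [v]) (s.take i ++ [v']) := by
  refine ⟨⟨i, v, hi, rfl, hv⟩, ⟨i, v', hi, rfl, hv'⟩, by simpa using hne,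
    (ll_take_concat_iff hi hi).2 (Or.inr ⟨rfl, hle⟩), ?_⟩
  rintro _ ⟨j, x, hj, rfl, hx⟩ h hxv
  refine (ll_take_concat_iff hi hj).2 (((ll_take_concat_iff hi hj).1 h).imp_right ?_)
  rintro ⟨rfl, hvx⟩
  exact ⟨rfl, hsucc x hx hvx fun h => hxv (by rw [h])⟩

theorem llSuccessor_push (hi : i < s.length)
    (hv : InRow (wordAt bot s i) (wordAt bot s (i + 1)) v)
    (hvc : v ++ [c] <+: wordAt bot s (i + 1)) :
    LlSuccessor bot s (s.take i ++ [v]) (s.take i ++ [v ++ [c]]) := by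
  have hnot : ¬ v ++ [c] <+: wordAt bot s i := fun h => by
    simpa using ((prefix_lcp_iff.2 ⟨h, hvc⟩).trans hv.1).length_le
  exact llSuccessor_of_rowLE hi hv (hv.concat hvc) (by simp)
    (Or.inr ⟨hnot, Or.inr (List.prefix_append _ _)⟩) fun x hx h hne => hx.rowLE_concat hvc h hne

theorem llSuccessor_pop (hi : i < s.length)
    (hv : InRow (wordAt bot s i) (wordAt bot s (i + 1)) v) (hvc : v ++ [c] <+: wordAt bot s i) :
    LlSuccessor bot s (s.take i ++ [v ++ [c]]) (s.take i ++ [v]) :=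
  llSuccessor_of_rowLE hi ⟨hv.1.trans (List.prefix_append _ _), Or.inl hvc⟩ hv (by simp)
    (Or.inl ⟨List.prefix_append _ _, hvc⟩) fun _ _ h hne => h.of_concat hvc hne

theorem llSuccessor_clone (hi : i + 1 < s.length) :
    LlSuccessor bot s (s.take (i + 1)) (s.take (i + 1) ++ [wordAt bot s (i + 1)]) := by
  have hi' : i < s.length := by omega
  nth_rw 1 [take_succ_eq_take_concat_wordAt (bot := bot) hi']
  refine ⟨⟨i, _, hi', rfl, InRow.right _ _⟩, ⟨i + 1, _, hi, rfl, InRow.left _ _⟩,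
    fun h => by simpa using (take_concat_inj hi' hi).1 h,
    (ll_take_concat_iff hi' hi).2 (Or.inl i.lt_succ_self), ?_⟩
  rintro _ ⟨j, x, hj, rfl, hx⟩ h hne
  rcases (ll_take_concat_iff hi' hj).1 h with hij | ⟨rfl, hle⟩
  · exact (ll_take_concat_iff hi hj).2
      ((Nat.succ_le_of_lt hij).lt_or_eq.imp_right fun hij => ⟨hij, RowLE.self_left _ _⟩)
  · exact absurd (by rw [InRow.eq_of_rowLE hx hle]) hne

theorem GenMilestone.length_lt_of_ll_take (hm : GenMilestone bot s m) (hi : i < s.length)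
    (h : ll bot (s.take (i + 1)) m) (hne : s.take (i + 1) ≠ m) : i + 1 < m.length := by
  obtain ⟨j, x, hj, rfl, hx⟩ := hm
  rw [take_succ_eq_take_concat_wordAt (bot := bot) hi] at h hne
  rw [length_take_concat hj]
  rcases (ll_take_concat_iff hi hj).1 h with hij | ⟨rfl, hle⟩
  · omega
  · exact absurd (by rw [InRow.eq_of_rowLE hx hle]) hne

end Milestones

/-! ## Substacks -/

section Substacks

variable {α : Type} {f : Stack2 α → Option (Stack2 α)} {r x y z : Stack2 α} {v : Word α}
  {c : Letter α} {k m : ℕ}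

theorem pop2_concat_s10 : pop2 (r ++ [v]) = if r = [] then none else some r := by
  simp [pop2, List.length_pos_iff]

theorem pop1_concat :
    pop1 (r ++ [v]) = if 1 < v.length then some (r ++ [v.dropLast]) else none := by
  simp [pop1]

theorem lvlS_concat_concat : lvlS (r ++ [v ++ [c]]) = some (lvlOf c) := by
  simp [lvlS, top1]

theorem iter_add : iter f (k + m) x = (iter f k x).bind (iter f m) := by
  induction k generalizing x with
  | zero => simp [iter]
  | succ k ih => simp only [Nat.succ_add, iter, Option.bind_assoc, ih]

theorem iter_pop2_eq_some_iff :
    iter pop2 k x = some y ↔ (k = 0 ∨ k < x.length) ∧ y = x.take (x.length - k) := by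
  induction k generalizing x with
  | zero => simp [iter, eq_comm]
  | succ k ih =>
    by_cases hx : 1 < x.length
    · simp only [iter, pop2, hx, if_true, Option.bind_some, ih, List.length_dropLast]
      rw [List.dropLast_eq_take, List.take_take,
        show min (x.length - 1 - k) (x.length - 1) = x.length - (k + 1) by omega]
      exact and_congr_left fun _ => by omega
    · simp only [iter, pop2, hx, if_false, Option.bind_none]
      exact iff_of_false nofun fun ⟨h, _⟩ => by omega

theorem iter_pop1_concat_eq_some_iff :
    iter pop1 k (r ++ [v]) = some y ↔
      (k = 0 ∨ k < v.length) ∧ y = r ++ [v.take (v.length - k)] := by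
  induction k generalizing v with
  | zero => simp [iter, eq_comm]
  | succ k ih =>
    by_cases hv : 1 < v.length
    · simp only [iter, pop1_concat, hv, if_true, Option.bind_some, ih, List.length_dropLast]
      rw [List.dropLast_eq_take, List.take_take,
        show min (v.length - 1 - k) (v.length - 1) = v.length - (k + 1) by omega]
      exact and_congr_left fun _ => by omega
    · simp only [iter, pop1_concat, hv, if_false, Option.bind_none]
      exact iff_of_false nofun fun ⟨h, _⟩ => by omega

theorem length_eq_of_iter_pop1 (h : iter pop1 k x = some y) : y.length = x.length := by
  rcases List.eq_nil_or_concat' x with rfl | ⟨r, v, rfl⟩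
  · cases k <;> simp_all [iter, pop1]
  · rw [(iter_pop1_concat_eq_some_iff.1 h).2]
    simp

theorem Substack.length_le (h : Substack x y) : x.length ≤ y.length := by
  obtain ⟨n, m, h⟩ := h
  obtain ⟨z, hz, hx⟩ := Option.bind_eq_some_iff.1 h
  rw [length_eq_of_iter_pop1 hx, (iter_pop2_eq_some_iff.1 hz).2]
  exact List.length_take_le' _ _

theorem Substack.of_prefix (h : Substack x y) (hy : y ≠ []) (hyz : y <+: z) : Substack x z := by
  obtain ⟨n, m, h⟩ := h
  have hpos := List.length_pos_iff.2 hy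
  have hz : iter pop2 (z.length - y.length) z = some y := by
    have hle := hyz.length_le
    refine iter_pop2_eq_some_iff.2 ⟨by omega, ?_⟩
    rw [Nat.sub_sub_self hle]
    exact List.prefix_iff_eq_take.1 hyz
  exact ⟨n, z.length - y.length + m, by rw [iter_add, hz, Option.bind_some, h]⟩

theorem substack_of_prefix (hy : y ≠ []) (h : y <+: x) : Substack y x :=
  Substack.of_prefix ⟨0, 0, rfl⟩ hy h

end Substacks

/-! ## Operations at the top of a stack -/

section TopSteps

variable {α : Type} {r y : Stack2 α} {v : Word α}

/-- `TopStep r v y`: the stack `y` arises from `r ++ [v]` by a level-2 stack operation. The case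
`drop` covers `Pop₂` and the collapse along a level-2 link. -/
inductive TopStep (r : Stack2 α) (v : Word α) : Stack2 α → Prop where
  | clone : TopStep r v (r ++ [v] ++ [v])
  | push (c : Letter α) (hc : ∀ a k, c = Sum.inr (a, k) → k = r.length) :
      TopStep r v (r ++ [v ++ [c]])
  | pop {p : Word α} {c : Letter α} (hv : v = p ++ [c]) : TopStep r v (r ++ [p])
  | drop {y : Stack2 α} (hy : y ≠ []) (hyr : y <+: r ++ [v]) : TopStep r v y

theorem TopStep.of_pop1 (h : pop1 (r ++ [v]) = some y) : TopStep r v y := by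
  rw [pop1_concat] at h
  split_ifs at h with hv
  obtain rfl := Option.some.inj h
  exact .pop (List.dropLast_append_getLast (List.length_pos_iff.1 (by omega))).symm

theorem TopStep.ne_nil (h : TopStep r v y) : y ≠ [] := by
  cases h with
  | drop hy => exact hy
  | _ => simp

end TopSteps

section Operations

variable {bot : A} {op : Op A} {r x y : Stack2 A} {v : Word A}

theorem TopStep.of_applyOp (h : applyOp bot op (r ++ [v]) = some y) : TopStep r v y := by
  cases op with
  | clone2 =>
    obtain rfl : r ++ [v] ++ [v] = y := by simpa [applyOp, clone2, top2] using h
    exact .clone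
  | pop1 => exact .of_pop1 h
  | pop2 =>
    rw [applyOp, pop2_concat_s10] at h
    split_ifs at h with hr
    obtain rfl := Option.some.inj h
    exact .drop hr (List.prefix_append _ _)
  | collapse =>
    rcases List.eq_nil_or_concat' v with rfl | ⟨p, a | ⟨a, k⟩, rfl⟩
    · simp [applyOp, collapse, top1] at h
    · exact .of_pop1 (by simpa [applyOp, collapse, top1] using h)
    · obtain ⟨hk, rfl⟩ : 0 < k ∧ (r ++ [p ++ [Sum.inr (a, k)]]).take k = y := by
        simpa [applyOp, collapse, top1] using h
      exact .drop (by simp [hk.ne']) (List.take_prefix _ _)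
  | push1 a =>
    obtain ⟨-, rfl⟩ : a ≠ bot ∧ r ++ [v ++ [Sum.inl a]] = y := by
      simpa [applyOp, push1, top2] using h
    exact .push _ (by simp)
  | push2 a =>
    obtain ⟨-, rfl⟩ : a ≠ bot ∧ r ++ [v ++ [Sum.inr (a, r.length)]] = y := by
      simpa [applyOp, push2, top2] using h
    exact .push _ (by simp +contextual [eq_comm])

theorem applyOp_nil : applyOp bot op [] = none := by
  cases op <;> simp [applyOp, clone2, pop1, pop2, collapse, push1, push2, top1, top2]

theorem exists_topStep_of_applyOp (h : applyOp bot op x = some y) :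
    ∃ r v, x = r ++ [v] ∧ TopStep r v y := by
  rcases List.eq_nil_or_concat' x with rfl | ⟨r, v, rfl⟩
  · simp [applyOp_nil] at h
  · exact ⟨r, v, rfl, .of_applyOp h⟩

end Operations

section Links

variable {α : Type} {r s y : Stack2 α} {v w : Word α}

/-- A 2-word all of whose level-2 links point strictly below the word they occur in, as they do in
every stack. -/
def LinksBounded (s : Stack2 α) : Prop :=
  ∀ r w, r ++ [w] <+: s → ∀ a k, Sum.inr (a, k) ∈ w → k ≤ r.length

theorem LinksBounded.of_prefix (h : LinksBounded s) (hr : r <+: s) : LinksBounded r :=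
  fun r' w hw => h r' w (hw.trans hr)

theorem linksBounded_concat_iff : LinksBounded (r ++ [w]) ↔
    LinksBounded r ∧ ∀ a k, Sum.inr (a, k) ∈ w → k ≤ r.length := by
  refine ⟨fun h => ⟨h.of_prefix (List.prefix_append _ _), h r w List.prefix_rfl⟩, ?_⟩
  rintro ⟨hr, hw⟩ r' w' h
  rcases List.prefix_concat_iff.1 h with h | h
  · obtain ⟨rfl, rfl⟩ := List.append_singleton_inj.1 h
    exact hw
  · exact hr r' w' h

theorem LinksBounded.topStep (h : LinksBounded (r ++ [v])) (hy : TopStep r v y) :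
    LinksBounded y := by
  obtain ⟨hr, hv⟩ := linksBounded_concat_iff.1 h
  cases hy with
  | clone =>
    refine linksBounded_concat_iff.2 ⟨h, fun a k hk => (hv a k hk).trans ?_⟩
    simp
  | push c hc =>
    refine linksBounded_concat_iff.2 ⟨hr, fun a k hk => ?_⟩
    rcases List.mem_append.1 hk with hk | hk
    · exact hv a k hk
    · exact (hc a k (List.mem_singleton.1 hk).symm).le
  | pop hp =>
    subst hp
    exact linksBounded_concat_iff.2 ⟨hr, fun a k hk => hv a k (List.mem_append_left _ hk)⟩
  | drop _ hyr => exact h.of_prefix hyr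

theorem LinksBounded.lt_of_mem_wordAt {bot a : α} {i k : ℕ} (hs : LinksBounded s)
    (hi : i ≤ s.length) (hk : Sum.inr (a, k) ∈ wordAt bot s i) : k < i := by
  rcases i with - | i
  · simp [wordAt] at hk
  · have hle := hs (s.take i) _
      (take_succ_eq_take_concat_wordAt (bot := bot) hi ▸ List.take_prefix _ _) a k hk
    exact Nat.lt_succ_of_le (hle.trans (List.length_take_le _ _))

theorem IsStack.linksBounded {bot : A} {s : Stack2 A} (h : IsStack bot s) : LinksBounded s := by
  induction h with
  | base => exact linksBounded_concat_iff (r := []).2 ⟨by simp [LinksBounded], by simp⟩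
  | step op _ hop ih =>
    obtain ⟨r, v, rfl, hstep⟩ := exists_topStep_of_applyOp hop
    exact ih.topStep hstep

end Links

/-! ## The word above a fixed stack -/

section Above

variable {α : Type} {r x y : Stack2 α} {p q u v : Word α} {c : Letter α}

/-- The 2-word `x` properly extends `r`, and the word of `x` directly above `r` has the
prefix `p`. -/
def ExtendsAt (r : Stack2 α) (p : Word α) (x : Stack2 α) : Prop :=
  ∃ u y, p <+: u ∧ x = r ++ u :: y

theorem extendsAt_append_cons : ExtendsAt r p (r ++ u :: y) ↔ p <+: u := by
  simp [ExtendsAt]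

theorem ExtendsAt.length_lt (h : ExtendsAt r p x) : r.length < x.length := by
  obtain ⟨u, y, -, rfl⟩ := h
  simp

theorem extendsAt_take_iff {bot : α} {s : Stack2 α} {i : ℕ} (hi : i < s.length) :
    ExtendsAt (s.take i) p s ↔ p <+: wordAt bot s (i + 1) := by
  have hs : s = s.take i ++ wordAt bot s (i + 1) :: s.drop (i + 1) := by
    rw [← List.singleton_append, ← List.append_assoc, ← take_succ_eq_take_concat_wordAt hi,
      List.take_append_drop]
  rw [← extendsAt_append_cons (r := s.take i) (y := s.drop (i + 1)), ← hs]

theorem extendsAt_nil_iff : ExtendsAt r [] x ↔ r <+: x ∧ ¬ x <+: r := by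
  constructor
  · rintro ⟨u, y, -, rfl⟩
    exact ⟨List.prefix_append _ _, fun h => by simpa using h.length_le⟩
  · rintro ⟨⟨z, rfl⟩, hz⟩
    rcases z with - | ⟨u, y⟩
    · simp at hz
    · exact ⟨u, y, u.nil_prefix, rfl⟩

theorem TopStep.extendsAt_or_prefix {r' : Stack2 α} (h : TopStep r' v y)
    (hx : ExtendsAt r [] (r' ++ [v])) : ExtendsAt r [] y ∨ y <+: r := by
  by_cases hyr : y <+: r
  · exact Or.inr hyr
  refine Or.inl (extendsAt_nil_iff.2 ⟨?_, hyr⟩)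
  obtain ⟨hx, hne⟩ := extendsAt_nil_iff.1 hx
  have hr : r <+: r' :=
    (List.prefix_concat_iff.1 hx).resolve_left fun h => hne (h ▸ List.prefix_rfl)
  cases h with
  | clone => exact hx.trans (List.prefix_append _ _)
  | push c hc => exact hr.trans (List.prefix_append _ _)
  | pop hv => exact hr.trans (List.prefix_append _ _)
  | drop _ hy => exact (List.prefix_or_prefix_of_prefix hy hx).resolve_left hyr

/-- A step between two proper extensions of `r` that changes the word directly above `r` at most
by a single letter, and only if this word is topmost. -/
inductive StepAbove (r : Stack2 α) : Stack2 α → Stack2 α → Prop where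
  | keep (u : Word α) (x y : Stack2 α) : StepAbove r (r ++ u :: x) (r ++ u :: y)
  | push (u : Word α) (c : Letter α) (hc : ∀ a k, c = Sum.inr (a, k) → k = r.length) :
      StepAbove r (r ++ [u]) (r ++ [u ++ [c]])
  | pop (u : Word α) (c : Letter α) : StepAbove r (r ++ [u ++ [c]]) (r ++ [u])

theorem StepAbove.of_prefix (hy : y <+: r ++ u :: x) (hry : ExtendsAt r [] y) :
    StepAbove r (r ++ u :: x) y := by
  obtain ⟨u', y', -, rfl⟩ := hry
  obtain ⟨rfl, -⟩ := List.cons_prefix_cons.1 ((List.prefix_append_right_inj r).1 hy)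
  exact .keep _ _ _

theorem TopStep.stepAbove {r' : Stack2 α} (h : TopStep r' v y) (hx : ExtendsAt r [] (r' ++ [v]))
    (hy : ExtendsAt r [] y) : StepAbove r (r' ++ [v]) y := by
  obtain ⟨u, x, -, hx⟩ := hx
  rcases List.eq_nil_or_concat' x with rfl | ⟨x, w, rfl⟩
  · obtain ⟨rfl, rfl⟩ := List.append_singleton_inj.1 hx
    cases h with
    | clone => simpa using StepAbove.keep v [] [v]
    | push c hc => exact .push v c hc
    | pop hv => exact hv ▸ .pop _ _
    | drop _ hyr => exact .of_prefix hyr hy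
  · obtain ⟨rfl, rfl⟩ := List.append_singleton_inj.1
      (show r' ++ [v] = (r ++ u :: x) ++ [w] by simpa using hx)
    have keep (z : Stack2 α) : StepAbove r (r ++ u :: x ++ [v]) (r ++ u :: x ++ z) := by
      simpa using StepAbove.keep u (x ++ [v]) (x ++ z)
    cases h with
    | clone => simpa using keep [v, v]
    | push c hc => exact keep _
    | pop hv => exact keep _
    | drop _ hyr =>
      rw [hx] at hyr ⊢
      exact .of_prefix hyr hy

theorem StepAbove.eq_of_extendsAt (h : StepAbove r x y) (hx : ¬ ExtendsAt r p x)
    (hy : ExtendsAt r p y) :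
    y = r ++ [p] ∧ ∀ q a k, p = q ++ [Sum.inr (a, k)] → k = r.length := by
  cases h with
  | keep u => exact absurd (extendsAt_append_cons.2 (extendsAt_append_cons.1 hy)) hx
  | push u c hc =>
    rw [extendsAt_append_cons] at hx hy
    obtain rfl := (List.prefix_concat_iff.1 hy).resolve_right hx
    exact ⟨rfl, fun q a k h => hc a k (List.append_singleton_inj.1 h).2⟩
  | pop u c =>
    rw [extendsAt_append_cons] at hx hy
    exact absurd (hy.trans (List.prefix_append _ _)) hx

theorem StepAbove.eq_of_not_extendsAt (h : StepAbove r x y) (hx : ExtendsAt r (q ++ [c]) x)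
    (hy : ¬ ExtendsAt r (q ++ [c]) y) : y = r ++ [q] := by
  cases h with
  | keep u => exact absurd (extendsAt_append_cons.2 (extendsAt_append_cons.1 hx)) hy
  | push u d hd =>
    rw [extendsAt_append_cons] at hx hy
    exact absurd (hx.trans (List.prefix_append _ _)) hy
  | pop u d =>
    rw [extendsAt_append_cons] at hx hy
    rw [(List.append_singleton_inj.1 ((List.prefix_concat_iff.1 hx).resolve_right hy)).1]

end Above

/-! ## Runs above a fixed stack -/

section Runs

theorem exists_not_and_succ {P : ℕ → Prop} {a b : ℕ} (hab : a ≤ b) (ha : ¬ P a) (hb : P b) :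
    ∃ t, a ≤ t ∧ t < b ∧ ¬ P t ∧ P (t + 1) := by
  induction b, hab using Nat.le_induction with
  | base => exact absurd hb ha
  | succ b hab ih =>
    by_cases h : P b
    · obtain ⟨t, hat, htb, ht⟩ := ih h
      exact ⟨t, hat, htb.trans b.lt_succ_self, ht⟩
    · exact ⟨b, hab, b.lt_succ_self, h, hb⟩

variable {S : CPS Q A Γ} {ρ : Run S} {r : Stack2 A} {p q v : Word A} {c : Letter A} {a b t : ℕ}

/-- From time `a` on, every stack of the run `ρ` properly extends `r`. -/
def Run.StaysAbove (ρ : Run S) (r : Stack2 A) (a : ℕ) : Prop :=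
  ∀ t, a ≤ t → t ≤ ρ.len → ExtendsAt r [] (ρ.stk t)

theorem Run.exists_topStep (ρ : Run S) (ht : t < ρ.len) :
    ∃ r v, ρ.stk t = r ++ [v] ∧ TopStep r v (ρ.stk (t + 1)) :=
  let ⟨_, _, _, hop⟩ := ρ.ok t ht
  exists_topStep_of_applyOp hop

theorem Run.topStep (ht : t < ρ.len) (hv : ρ.stk t = r ++ [v]) :
    TopStep r v (ρ.stk (t + 1)) := by
  obtain ⟨r', v', h, hstep⟩ := ρ.exists_topStep ht
  obtain ⟨rfl, rfl⟩ := List.append_singleton_inj.1 (hv.symm.trans h)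
  exact hstep

theorem Run.stk_succ_ne_nil (ρ : Run S) (ht : t < ρ.len) : ρ.stk (t + 1) ≠ [] := by
  obtain ⟨r, v, -, h⟩ := ρ.exists_topStep ht
  exact h.ne_nil

namespace Run.StaysAbove

theorem mono (h : ρ.StaysAbove r a) (hab : a ≤ b) : ρ.StaysAbove r b :=
  fun t ht => h t (hab.trans ht)

theorem stepAbove (h : ρ.StaysAbove r a) (hat : a ≤ t) (ht : t < ρ.len) :
    StepAbove r (ρ.stk t) (ρ.stk (t + 1)) := by
  obtain ⟨r', v, hv, hstep⟩ := ρ.exists_topStep ht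
  have hx := h t hat ht.le
  rw [hv] at hx ⊢
  exact hstep.stepAbove hx (h (t + 1) (by omega) ht)

theorem exists_push (h : ρ.StaysAbove r a) (hab : a ≤ b) (hb : b ≤ ρ.len)
    (hpa : ¬ ExtendsAt r p (ρ.stk a)) (hpb : ExtendsAt r p (ρ.stk b)) :
    ∃ t, a < t ∧ t ≤ b ∧ ρ.stk t = r ++ [p] ∧
      ∀ q a k, p = q ++ [Sum.inr (a, k)] → k = r.length := by
  obtain ⟨t, hat, htb, ht, ht'⟩ :=
    exists_not_and_succ (P := fun t => ExtendsAt r p (ρ.stk t)) hab hpa hpb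
  exact ⟨t + 1, by omega, htb, (h.stepAbove hat (by omega)).eq_of_extendsAt ht ht'⟩

theorem exists_pop (h : ρ.StaysAbove r a) (hab : a ≤ b) (hb : b ≤ ρ.len)
    (hca : ExtendsAt r (q ++ [c]) (ρ.stk a)) (hcb : ¬ ExtendsAt r (q ++ [c]) (ρ.stk b)) :
    ∃ t, a < t ∧ t ≤ b ∧ ρ.stk t = r ++ [q] := by
  obtain ⟨t, hat, htb, ht, ht'⟩ :=
    exists_not_and_succ (P := fun t => ¬ ExtendsAt r (q ++ [c]) (ρ.stk t)) hab (not_not.2 hca) hcb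
  exact ⟨t + 1, by omega, htb,
    (h.stepAbove hat (by omega)).eq_of_not_extendsAt (not_not.1 ht) ht'⟩

theorem of_not_prefix (ha : ExtendsAt r [] (ρ.stk a))
    (h : ∀ t, a < t → t ≤ ρ.len → ρ.stk t ≠ [] → ¬ ρ.stk t <+: r) : ρ.StaysAbove r a := by
  intro t hat
  induction t, hat using Nat.le_induction with
  | base => exact fun _ => ha
  | succ t hat ih =>
    intro ht
    obtain ⟨r', v, hv, hstep⟩ := ρ.exists_topStep ht
    exact (hstep.extendsAt_or_prefix (hv ▸ ih (by omega))).resolve_right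
      (h (t + 1) (by omega) ht (ρ.stk_succ_ne_nil ht))

theorem loopSeg_of_lvlOf_eq_one (h : ρ.StaysAbove r a) (hab : a ≤ b) (hb : b ≤ ρ.len)
    (hva : ρ.stk a = r ++ [v]) (hvb : ρ.stk b = r ++ [v])
    (hlvl : ∀ t, a ≤ t → t ≤ b → ∀ p e c, ρ.stk t = r ++ [p] → p <+: e → e ++ [c] <+: v →
      lvlOf c = 1) : LoopSeg ρ a b := by
  refine ⟨hab, hb, hvb.trans hva.symm, ?_, ?_⟩
  · intro t hat htb y hy hsub
    rw [hva, pop2_concat_s10] at hy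
    split_ifs at hy
    obtain rfl := Option.some.inj hy
    exact hsub.length_le.not_gt (h t hat (htb.trans hb)).length_lt
  · intro t hat htb m hm y hy hty m' hm'
    rw [hva] at hy ⊢
    obtain ⟨hmv, rfl⟩ := iter_pop1_concat_eq_some_iff.1 hy
    refine ⟨_, iter_pop1_concat_eq_some_iff.2 ⟨by omega, rfl⟩, ?_⟩
    obtain he | ⟨e, c, hec⟩ := List.eq_nil_or_concat' (v.take (v.length - m'))
    · have := congrArg List.length he
      simp at this
      omega
    have hlen : e.length + 1 = v.length - m' := by
      simpa using (congrArg List.length hec).symm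
    have hev : e ++ [c] <+: v := hec ▸ List.take_prefix _ _
    have hpe : v.take (v.length - m) <+: e :=
      List.prefix_of_prefix_length_le (List.take_prefix _ _) ((List.prefix_append _ _).trans hev)
        (by simp; omega)
    rw [hec, lvlS_concat_concat, hlvl t hat htb _ e c hty hpe hev]

theorem loopSeg_of_link_lt (h : ρ.StaysAbove r a) (hab : a ≤ b) (hb : b ≤ ρ.len)
    (hva : ρ.stk a = r ++ [v]) (hvb : ρ.stk b = r ++ [v])
    (hv : ∀ a k, Sum.inr (a, k) ∈ v → k < r.length) : LoopSeg ρ a b := by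
  refine h.loopSeg_of_lvlOf_eq_one hab hb hva hvb ?_
  rintro t hat htb p e (x | ⟨x, k⟩) ht hpe hev
  · rfl
  · obtain ⟨-, -, -, -, hk⟩ := (h.mono hat).exists_push (p := e ++ [Sum.inr (x, k)]) htb hb
      (by
        rw [ht, extendsAt_append_cons]
        exact fun h => by simpa using (h.trans hpe).length_le)
      (by rwa [hvb, extendsAt_append_cons])
    exact absurd (hk e x k rfl) (hv x k (hev.subset (by simp))).ne

theorem loopSeg_of_forall_ne (h : ρ.StaysAbove r a) (hab : a ≤ b) (hb : b ≤ ρ.len)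
    (hva : ρ.stk a = r ++ [q ++ [c]]) (hvb : ρ.stk b = r ++ [q ++ [c]])
    (hq : ∀ t, a ≤ t → t ≤ b → ρ.stk t ≠ r ++ [q]) : LoopSeg ρ a b := by
  refine h.loopSeg_of_lvlOf_eq_one hab hb hva hvb fun t hat htb p e d ht hpe hev => ?_
  obtain ⟨t', ht', htt', hpop⟩ := h.exists_pop (q := q) (c := c) hat (htb.trans hb)
    (by rw [hva, extendsAt_append_cons])
    (by
      rw [ht, extendsAt_append_cons]
      exact fun h => by simpa using hev.length_le.trans (h.trans hpe).length_le)
  exact absurd hpop (hq t' ht'.le (htt'.trans htb))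

end Run.StaysAbove

end Runs

/-! ## Last visits of generalised milestones -/

section Visits

variable {S : CPS Q A Γ} {ρ : Run S} {s : Stack2 A} {v p : Word A} {c : Letter A} {a i : ℕ}

/-- At time `a` the run `ρ` visits the generalised milestone `s.take i ++ [v]` of `s`, and from
then on it stays above `s.take i`. -/
structure Run.MilestoneVisit (ρ : Run S) (s : Stack2 A) (a i : ℕ) (v : Word A) : Prop where
  le_len : a ≤ ρ.len
  lt_length : i < s.length
  stk_eq : ρ.stk a = s.take i ++ [v]
  inRow : InRow (wordAt S.bot s i) (wordAt S.bot s (i + 1)) v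
  staysAbove : ρ.StaysAbove (s.take i) a

/-- A visit of a generalised milestone after which the run never returns to it. -/
structure Run.LastVisit (ρ : Run S) (s : Stack2 A) (a i : ℕ) (v : Word A) : Prop extends
    ρ.MilestoneVisit s a i v where
  stk_ne : ∀ t, a < t → t ≤ ρ.len → ρ.stk t ≠ s.take i ++ [v]

namespace Run

theorem MilestoneVisit.exists_lastVisit (h : ρ.MilestoneVisit s a i v) :
    ∃ b, a ≤ b ∧ ρ.LastVisit s b i v := by
  classical
  let P t := ρ.stk t = s.take i ++ [v]
  have hab : a ≤ Nat.findGreatest P ρ.len := Nat.le_findGreatest h.le_len h.stk_eq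
  exact ⟨_, hab, ⟨Nat.findGreatest_le _, h.lt_length,
    Nat.findGreatest_spec (P := P) h.le_len h.stk_eq, h.inRow, h.staysAbove.mono hab⟩,
    fun _ => Nat.findGreatest_is_greatest⟩

theorem LastVisit.eq_wordAt_of_clone (h : ρ.LastVisit s a i v) (hend : ρ.stk ρ.len = s)
    (ha : a < ρ.len) (hv : ρ.stk (a + 1) = s.take i ++ [v] ++ [v]) :
    ρ.StaysAbove (s.take i ++ [v]) (a + 1) ∧ i + 1 < s.length ∧ v = wordAt S.bot s (i + 1) := by
  have habove : ρ.StaysAbove (s.take i ++ [v]) (a + 1) := by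
    refine .of_not_prefix ⟨v, [], v.nil_prefix, hv⟩ fun t hat ht _ hpre => ?_
    rcases List.prefix_concat_iff.1 hpre with heq | hpre
    · exact h.stk_ne t (by omega) ht heq
    · exact (h.staysAbove t (by omega) ht).length_lt.not_ge hpre.length_le
  have hs := habove ρ.len ha le_rfl
  rw [hend] at hs
  have hi : i + 1 < s.length := by
    simpa only [length_take_concat h.lt_length] using hs.length_lt
  have hpre := (extendsAt_nil_iff.1 hs).1
  rw [List.prefix_iff_eq_take, length_take_concat h.lt_length,
    take_succ_eq_take_concat_wordAt (bot := S.bot) h.lt_length] at hpre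
  exact ⟨habove, hi, (List.append_singleton_inj.1 hpre).2⟩

theorem LastVisit.concat_prefix_of_push (h : ρ.LastVisit s a i v) (hend : ρ.stk ρ.len = s)
    (ha : a < ρ.len) (hv : ρ.stk (a + 1) = s.take i ++ [v ++ [c]]) :
    v ++ [c] <+: wordAt S.bot s (i + 1) := by
  by_contra hvc
  obtain ⟨t, hat, ht, heq⟩ := (h.staysAbove.mono a.le_succ).exists_pop ha le_rfl
    (by rw [hv, extendsAt_append_cons]) (by rwa [hend, extendsAt_take_iff h.lt_length])
  exact h.stk_ne t (by omega) ht heq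

theorem LastVisit.prefix_of_pop (h : ρ.LastVisit s a i (p ++ [c])) (hend : ρ.stk ρ.len = s)
    (ha : a < ρ.len) (hp : ρ.stk (a + 1) = s.take i ++ [p]) :
    InRow (wordAt S.bot s i) (wordAt S.bot s (i + 1)) p ∧ p ++ [c] <+: wordAt S.bot s i := by
  have hnot : ¬ p ++ [c] <+: wordAt S.bot s (i + 1) := fun hpc => by
    obtain ⟨t, hat, ht, heq, -⟩ := (h.staysAbove.mono a.le_succ).exists_push (p := p ++ [c]) ha
      le_rfl
      (by rw [hp, extendsAt_append_cons]; exact fun h => by simpa using h.length_le)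
      (by rwa [hend, extendsAt_take_iff h.lt_length])
    exact h.stk_ne t (by omega) ht heq
  have hpc := h.inRow.2.resolve_right hnot
  refine ⟨⟨(List.prefix_concat_iff.1 h.inRow.1).resolve_left fun heq => ?_,
    Or.inl ((List.prefix_append _ _).trans hpc)⟩, hpc⟩
  exact hnot (heq ▸ lcp_prefix_right _ _)

end Run

end Visits

/-! ## Decompositions into milestone steps and loops -/

section Decompositions

variable {S : CPS Q A Γ} {ρ : Run S} {s : Stack2 A} {v : Word A} {a b i : ℕ}

/-- `LoopDecomp` for the part of `ρ` from time `a` on, given recursively: it is trivial or starts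
with a step to the `≪`-successor followed by a loop. -/
inductive LoopDecompFrom (ρ : Run S) (bot : A) (s : Stack2 A) : ℕ → Prop where
  | nil : LoopDecompFrom ρ bot s ρ.len
  | cons {a b : ℕ} (hstep : LlSuccessor bot s (ρ.stk a) (ρ.stk (a + 1)))
      (hloop : LoopSeg ρ (a + 1) b) (h : LoopDecompFrom ρ bot s b) : LoopDecompFrom ρ bot s a

theorem LoopDecompFrom.exists_idx {bot : A} (h : LoopDecompFrom ρ bot s a) :
    ∃ (n : ℕ) (idx : ℕ → ℕ), idx 0 = a ∧ idx (2 * n) = ρ.len ∧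
      (∀ i, i < 2 * n → idx i ≤ idx (i + 1)) ∧
      ∀ i, i < n → idx (2 * i + 1) = idx (2 * i) + 1 ∧
        LlSuccessor bot s (ρ.stk (idx (2 * i))) (ρ.stk (idx (2 * i + 1))) ∧
        LoopSeg ρ (idx (2 * i + 1)) (idx (2 * i + 2)) := by
  induction h with
  | nil => exact ⟨0, fun _ => ρ.len, by simp⟩
  | @cons a b hstep hloop _ ih =>
    obtain ⟨n, idx, rfl, hn, hmono, hidx⟩ := ih
    refine ⟨n + 1, fun | 0 => a | 1 => a + 1 | k + 2 => idx k, rfl, hn, ?_, ?_⟩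
    · rintro (- | - | i) hi
      · exact a.le_succ
      · exact hloop.1
      · exact hmono i (by omega)
    · rintro (- | i) hi
      · exact ⟨rfl, hstep, hloop⟩
      · exact hidx i (by omega)

theorem loopDecomp_iff {bot : A} : LoopDecomp ρ bot s ↔ LoopDecompFrom ρ bot s 0 := by
  refine ⟨?_, fun h => h.exists_idx⟩
  rintro ⟨n, idx, h0, hn, -, hidx⟩
  suffices h : LoopDecompFrom ρ bot s (idx (2 * 0)) from h0 ▸ h
  refine Nat.decreasingInduction (motive := fun i _ => LoopDecompFrom ρ bot s (idx (2 * i)))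
    (fun i hi ih => ?_) (hn ▸ .nil) n.zero_le
  obtain ⟨hsucc, hstep, hloop⟩ := hidx i hi
  rw [hsucc] at hstep hloop
  exact .cons hstep hloop ih

theorem Run.LastVisit.exists_next (hs : LinksBounded s) (hend : ρ.stk ρ.len = s)
    (h : ρ.LastVisit s a i v) (ha : a < ρ.len) :
    ∃ j w, ρ.MilestoneVisit s (a + 1) j w ∧ LlSuccessor S.bot s (ρ.stk a) (ρ.stk (a + 1)) ∧
      ∀ b, a + 1 ≤ b → ρ.LastVisit s b j w → LoopSeg ρ (a + 1) b := by
  have habove := h.staysAbove.mono a.le_succ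
  have hlen : (s.take i).length = i := List.length_take_of_le h.lt_length.le
  have hstep := Run.topStep ha h.stk_eq
  generalize hy : ρ.stk (a + 1) = y at hstep
  rw [h.stk_eq]
  cases hstep with
  | clone =>
    obtain ⟨habove, hi, rfl⟩ := h.eq_wordAt_of_clone hend ha hy
    rw [← take_succ_eq_take_concat_wordAt h.lt_length] at hy habove ⊢
    refine ⟨i + 1, _, ⟨ha, hi, hy, InRow.left _ _, habove⟩, llSuccessor_clone hi,
      fun b hab hb => ?_⟩
    refine habove.loopSeg_of_link_lt hab hb.le_len hy hb.stk_eq fun x k hk => ?_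
    rw [List.length_take_of_le hi.le]
    exact hs.lt_of_mem_wordAt hi.le hk
  | push c hc =>
    have hvc := h.concat_prefix_of_push hend ha hy
    have hsucc := llSuccessor_push h.lt_length h.inRow hvc
    refine ⟨i, _, ⟨ha, h.lt_length, hy, h.inRow.concat hvc, habove⟩, hsucc, fun b hab hb => ?_⟩
    exact habove.loopSeg_of_forall_ne hab hb.le_len hy hb.stk_eq
      fun t hat htb => h.stk_ne t hat (htb.trans hb.le_len)
  | @pop p c hv =>
    subst hv
    obtain ⟨hp, hpc⟩ := h.prefix_of_pop hend ha hy
    refine ⟨i, p, ⟨ha, h.lt_length, hy, hp, habove⟩, llSuccessor_pop h.lt_length hp hpc,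
      fun b hab hb => ?_⟩
    refine habove.loopSeg_of_link_lt hab hb.le_len hy hb.stk_eq fun x k hk => ?_
    rw [hlen]
    exact hs.lt_of_mem_wordAt h.lt_length.le (hpc.subset (List.mem_append_left _ hk))
  | drop _ hpre =>
    rcases List.prefix_concat_iff.1 hpre with heq | hpre
    · exact absurd (hy.trans heq) (h.stk_ne _ a.lt_succ_self ha)
    · have hlt := (habove (a + 1) le_rfl ha).length_lt
      rw [hy] at hlt
      exact absurd hpre.length_le hlt.not_ge

theorem Run.LastVisit.loopDecompFrom {a i : ℕ} {v : Word A} (hs : LinksBounded s)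
    (hend : ρ.stk ρ.len = s) (h : ρ.LastVisit s a i v) : LoopDecompFrom ρ S.bot s a := by
  rcases h.le_len.eq_or_lt with rfl | ha
  · exact .nil
  · obtain ⟨j, w, hvisit, hsucc, hloop⟩ := h.exists_next hs hend ha
    obtain ⟨b, hab, hb⟩ := hvisit.exists_lastVisit
    exact .cons hsucc (hloop b hab hb) (hb.loopDecompFrom hs hend)
termination_by ρ.len - a

theorem loopDecomp_of_not_substack (hs : LinksBounded s) (hm : GenMilestone S.bot s (ρ.stk 0))
    (hend : ρ.stk ρ.len = s) (h : ∀ t, 0 < t → t ≤ ρ.len → ¬ Substack (ρ.stk t) (ρ.stk 0)) :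
    LoopDecomp ρ S.bot s := by
  obtain ⟨i, v, hi, h0, hrow⟩ := hm
  rw [h0] at h
  have habove : ρ.StaysAbove (s.take i) 0 :=
    .of_not_prefix ⟨v, [], v.nil_prefix, h0⟩ fun t ht htl hne hpre =>
      h t ht htl (substack_of_prefix hne (hpre.trans (List.prefix_append _ _)))
  have hlast : ρ.LastVisit s 0 i v := ⟨⟨ρ.len.zero_le, hi, h0, hrow, habove⟩, fun t ht htl heq =>
    h t ht htl (substack_of_prefix (by simp [heq]) (heq ▸ List.prefix_rfl))⟩
  exact loopDecomp_iff.2 (hlast.loopDecompFrom hs hend)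

theorem LoopSeg.not_substack {r t : Stack2 A} {j : ℕ} (h : LoopSeg ρ a b)
    (hv : ρ.stk a = r ++ [v]) (ht : t ≠ []) (htr : t <+: r) (haj : a ≤ j) (hjb : j ≤ b) :
    ¬ Substack (ρ.stk j) t := fun hsub => by
  have hr : r ≠ [] := fun hr => ht (List.prefix_nil.1 (hr ▸ htr))
  exact h.2.2.2.1 j haj hjb r (by rw [hv, pop2_concat_s10, if_neg hr]) (hsub.of_prefix ht htr)

theorem LoopDecompFrom.not_substack_take {bot : A} {j : ℕ} (h : LoopDecompFrom ρ bot s a)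
    (hi : i < s.length) (ha : ρ.stk a = s.take (i + 1) ∨ i + 1 < (ρ.stk a).length)
    (haj : a < j) (hj : j ≤ ρ.len) : ¬ Substack (ρ.stk j) (s.take (i + 1)) := by
  have hne_nil : s.take (i + 1) ≠ [] := List.ne_nil_of_length_pos (by simp; omega)
  induction h with
  | nil => omega
  | @cons a b hstep hloop _ ih =>
    obtain ⟨-, hm, hne, hll, -⟩ := hstep
    have hlt : i + 1 < (ρ.stk (a + 1)).length := by
      rcases ha with ha | ha
      · exact hm.length_lt_of_ll_take hi (ha ▸ hll) (ha ▸ hne)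
      · exact ha.trans_le hll.length_le
    rcases le_or_gt j b with hjb | hbj
    · obtain ⟨l, x, hl, hm, -⟩ := hm
      rw [hm, length_take_concat hl] at hlt
      exact hloop.not_substack hm hne_nil (List.take_prefix_take_left (by omega)) haj hjb
    · exact ih (Or.inr (by rwa [hloop.2.2.1])) hbj

theorem not_substack_take_iff_loopDecomp (hs : LinksBounded s) (hi : i < s.length)
    (h0 : ρ.stk 0 = s.take (i + 1)) (hend : ρ.stk ρ.len = s) :
    (∀ t, 0 < t → t ≤ ρ.len → ¬ Substack (ρ.stk t) (s.take (i + 1))) ↔ LoopDecomp ρ S.bot s := by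
  constructor
  · rw [← h0]
    exact loopDecomp_of_not_substack hs (h0 ▸ genMilestone_take hi) hend
  · exact fun h _ => (loopDecomp_iff.1 h).not_substack_take hi (Or.inl h0)

end Decompositions

theorem milestone_run_loop_decomposition_general (S : CPS Q A Γ) (s m₁ : Stack2 A)
    (hs : LinksBounded s) (hm : GenMilestone S.bot s m₁) :
    (∀ ρ : Run S, ρ.stk 0 = m₁ → ρ.stk ρ.len = s →
      (∀ i, 0 < i → i ≤ ρ.len → ¬ Substack (ρ.stk i) m₁) →
      LoopDecomp ρ S.bot s) ∧
    (∀ (k : ℕ) (t : Stack2 A) (q q' : Q) (ρ : Run S), iter pop2 k s = some t →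
      ρ.cfg 0 = (q, t) → ρ.cfg ρ.len = (q', s) →
      ((∀ i, 0 < i → i ≤ ρ.len → ¬ Substack (ρ.stk i) t) ↔ LoopDecomp ρ S.bot s)) := by
  constructor
  · rintro ρ rfl hend h
    exact loopDecomp_of_not_substack hs hm hend h
  · intro k t q q' ρ hk h0 hend
    obtain ⟨i, -, hi, -⟩ := hm
    obtain ⟨hks, rfl⟩ := iter_pop2_eq_some_iff.1 hk
    obtain ⟨j, hj⟩ : ∃ j, s.length - k = j + 1 := Nat.exists_eq_succ_of_ne_zero (by omega)
    rw [hj] at h0 ⊢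
    exact not_substack_take_iff_loopDecomp hs (by omega) (congrArg Prod.snd h0)
      (congrArg Prod.snd hend)

/-- Runs from a milestone `m₁` of `s` to `s` avoiding substacks of
`m₁` decompose as alternations of one-step transitions between consecutive
generalised milestones and loops; runs witnessing `R_→` are exactly those that
decompose this way. -/
theorem milestone_run_loop_decomposition
    {Q A Γ : Type} [DecidableEq A] (S : CPS Q A Γ)
    (s m₁ : Stack2 A) (hs : IsStack S.bot s) (hm : Milestone S.bot s m₁) :
    (∀ ρ : Run S, ρ.stk 0 = m₁ → ρ.stk ρ.len = s →
      (∀ i, 0 < i → i ≤ ρ.len → ¬ Substack (ρ.stk i) m₁) →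
      LoopDecomp ρ S.bot s) ∧
    (∀ (k : ℕ) (t : Stack2 A) (q q' : Q) (ρ : Run S), iter pop2 k s = some t →
      ρ.cfg 0 = (q, t) → ρ.cfg ρ.len = (q', s) →
      ((∀ i, 0 < i → i ≤ ρ.len → ¬ Substack (ρ.stk i) t) ↔ LoopDecomp ρ S.bot s)) :=
  milestone_run_loop_decomposition_general S s m₁ hs.linksBounded hm.genMilestone

end CPG
end
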